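/- Let K be a number field of degree n = [K:ℚ] and let O_{K,2} = O_K ⊗_ℤ ℤ₂. Then the 2-adic signature space V₂ = O_{K,2}ˣ/((1 + 4O_{K,2})·O_{K,2}ˣ²) is an elementary abelian 2-group of order 2ⁿ (equivalently, an F₂-vector space of dimension n). -/

import Mathlib

open NumberField
open scoped TensorProduct

variable (K : Type*) [Field K] [NumberField K]

/-- `O_{K,2} = O_K ⊗_ℤ ℤ₂`. -/
def OK2 : Type _ := 𝓞 K ⊗[ℤ] ℤ_[2]

noncomputable instance : CommRing (OK2 K) := inferInstanceAs (CommRing (𝓞 K ⊗[ℤ] ℤ_[2]))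

attribute [irreducible] OK2

/-- The subgroup `(1 + 4·O_{K,2})·O_{K,2}ˣ²` of `O_{K,2}ˣ`: units congruent to a square
modulo `4`. -/
def modFourSquares : Subgroup (OK2 K)ˣ where
  carrier := {w : (OK2 K)ˣ | ∃ (a : OK2 K) (y : (OK2 K)ˣ),
    (w : OK2 K) = (1 + 4 * a) * (y : OK2 K) ^ 2}
  one_mem' := ⟨0, 1, by rw [Units.val_one]; ring⟩
  mul_mem' := by
    rintro w₁ w₂ ⟨a₁, y₁, h₁⟩ ⟨a₂, y₂, h₂⟩
    refine ⟨a₁ + a₂ + 4 * (a₁ * a₂), y₁ * y₂, ?_⟩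
    rw [Units.val_mul, Units.val_mul, h₁, h₂]
    ring
  inv_mem' := by
    rintro w ⟨a, y, h⟩
    have hww : (w : OK2 K) * ((w⁻¹ : (OK2 K)ˣ) : OK2 K) = 1 := w.mul_inv
    have hyy : (y : OK2 K) * ((y⁻¹ : (OK2 K)ˣ) : OK2 K) = 1 := y.mul_inv
    set e : OK2 K := ((w⁻¹ : (OK2 K)ˣ) : OK2 K) * (y : OK2 K) ^ 2 with he
    have h1 : (1 + 4 * a) * e = 1 := by
      calc (1 + 4 * a) * e
          = ((1 + 4 * a) * (y : OK2 K) ^ 2) * ((w⁻¹ : (OK2 K)ˣ) : OK2 K) := by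
            rw [he]; ring
        _ = (w : OK2 K) * ((w⁻¹ : (OK2 K)ˣ) : OK2 K) := by rw [← h]
        _ = 1 := hww
    have h2 : (1 : OK2 K) + 4 * (-(a * e)) = e := by linear_combination -h1
    refine ⟨-(a * e), y⁻¹, ?_⟩
    rw [h2, he]
    calc ((w⁻¹ : (OK2 K)ˣ) : OK2 K)
        = ((w⁻¹ : (OK2 K)ˣ) : OK2 K) *
            ((y : OK2 K) * ((y⁻¹ : (OK2 K)ˣ) : OK2 K)) ^ 2 := by rw [hyy]; ring
      _ = ((w⁻¹ : (OK2 K)ˣ) : OK2 K) * (y : OK2 K) ^ 2 *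
            ((y⁻¹ : (OK2 K)ˣ) : OK2 K) ^ 2 := by ring

/-- The 2-adic signature space `V₂ = O_{K,2}ˣ/((1 + 4·O_{K,2})·O_{K,2}ˣ²)`. -/
abbrev V2 := (OK2 K)ˣ ⧸ modFourSquares K

/-- `O_{K,2}` as a `ℤ₂`-algebra. -/
noncomputable def OK2equiv : OK2 K ≃+* (ℤ_[2] ⊗[ℤ] 𝓞 K) :=
  RingEquiv.trans (by with_unfolding_all exact RingEquiv.refl (𝓞 K ⊗[ℤ] ℤ_[2]))
    (Algebra.TensorProduct.comm ℤ (𝓞 K) ℤ_[2]).toRingEquiv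

abbrev OK4 := 𝓞 K ⧸ Ideal.span {(4 : 𝓞 K)}

lemma four_eq_zero : (4 : OK4 K) = 0 :=
  Ideal.Quotient.eq_zero_iff_mem.2 (Ideal.mem_span_singleton_self (4 : 𝓞 K))

noncomputable def padicToOK4 : ℤ_[2] →+* OK4 K :=
  (ZMod.castHom (show ringChar (OK4 K) ∣ 2 ^ 2 from
    ringChar.dvd (by have := four_eq_zero K; push_cast; exact this)) (OK4 K)).comp
    (PadicInt.toZModPow 2)

noncomputable def tensorToOK4 : (ℤ_[2] ⊗[ℤ] 𝓞 K) →+* OK4 K :=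
  (Algebra.TensorProduct.lift (padicToOK4 K).toIntAlgHom
    (Ideal.Quotient.mk (Ideal.span {(4 : 𝓞 K)})).toIntAlgHom
    (fun _ _ => Commute.all _ _)).toRingHom

lemma tensorToOK4_one_tmul (x : 𝓞 K) :
    tensorToOK4 K (1 ⊗ₜ x) = Ideal.Quotient.mk (Ideal.span {(4 : 𝓞 K)}) x := by
  simp [tensorToOK4]

lemma exists_decomp (r : ℤ_[2] ⊗[ℤ] 𝓞 K) :
    ∃ (x : 𝓞 K) (s : ℤ_[2] ⊗[ℤ] 𝓞 K), r = 1 ⊗ₜ x + 4 * s := by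
  induction r with
  | zero => exact ⟨0, 0, by simp⟩
  | add a b ha hb =>
    obtain ⟨x, s, rfl⟩ := ha
    obtain ⟨y, t, rfl⟩ := hb
    exact ⟨x + y, s + t, by rw [TensorProduct.tmul_add]; ring⟩
  | tmul t x =>
    obtain ⟨c, hc⟩ := Ideal.mem_span_singleton.1 (PadicInt.appr_spec 2 t)
    have ht : t = (t.appr 2 : ℤ) • (1 : ℤ_[2]) + 4 * c := by
      have : ((2 : ℕ) : ℤ_[2]) ^ 2 = 4 := by norm_num
      rw [this] at hc
      rw [← hc]; simp
    have h4 : (4 : ℤ_[2] ⊗[ℤ] 𝓞 K) = (4 : ℤ_[2]) ⊗ₜ 1 := by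
      have := map_ofNat (Algebra.TensorProduct.includeLeft :
        ℤ_[2] →ₐ[ℤ] ℤ_[2] ⊗[ℤ] 𝓞 K) 4
      rw [← this]; rfl
    refine ⟨(t.appr 2 : ℤ) • x, c ⊗ₜ x, ?_⟩
    conv_lhs => rw [ht]
    rw [TensorProduct.add_tmul, TensorProduct.smul_tmul, h4,
      Algebra.TensorProduct.tmul_mul_tmul, one_mul]

lemma isUnit_one_add_four (s : ℤ_[2] ⊗[ℤ] 𝓞 K) : IsUnit (1 + 4 * s) := by
  have : (4 : ℤ_[2] ⊗[ℤ] 𝓞 K) ∈ (⊥ : Ideal (ℤ_[2] ⊗[ℤ] 𝓞 K)).jacobson := by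
    rw [Ideal.jacobson, Ideal.mem_sInf]
    rintro M ⟨-, hM⟩
    have h := Ideal.isMaximal_comap_of_isIntegral_of_isMaximal (R := ℤ_[2]) M
    have h2 := IsLocalRing.eq_maximalIdeal h
    have h3 : (2 : ℤ_[2]) ∈ Ideal.comap (algebraMap ℤ_[2] (ℤ_[2] ⊗[ℤ] 𝓞 K)) M := by
      rw [h2, PadicInt.maximalIdeal_eq_span_p]
      exact Ideal.mem_span_singleton_self _
    rw [Ideal.mem_comap, map_ofNat] at h3
    have := M.mul_mem_left 2 h3
    norm_num at this
    exact this
  rw [add_comm]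
  exact Ideal.mem_jacobson_bot.1 this s

noncomputable def redHom : OK2 K →+* OK4 K := (tensorToOK4 K).comp (OK2equiv K).toRingHom

lemma redHom_surj : Function.Surjective (redHom K) := by
  intro a
  obtain ⟨x, rfl⟩ := Ideal.Quotient.mk_surjective a
  refine ⟨(OK2equiv K).symm (1 ⊗ₜ x), ?_⟩
  simp [redHom, tensorToOK4_one_tmul]

lemma redHom_eq_zero (r : OK2 K) (h : redHom K r = 0) : ∃ s, r = 4 * s := by
  obtain ⟨x, s, hx⟩ := exists_decomp K (OK2equiv K r)
  have h1 : tensorToOK4 K (OK2equiv K r) = 0 := h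
  rw [hx, map_add, map_mul, tensorToOK4_one_tmul, map_ofNat, four_eq_zero, zero_mul, add_zero,
    Ideal.Quotient.eq_zero_iff_mem, Ideal.mem_span_singleton] at h1
  obtain ⟨y, rfl⟩ := h1
  refine ⟨(OK2equiv K).symm (1 ⊗ₜ y + s), ?_⟩
  apply (OK2equiv K).injective
  rw [hx, map_mul, map_ofNat, RingEquiv.apply_symm_apply, mul_add]
  congr 1
  have h4 : (4 : ℤ_[2] ⊗[ℤ] 𝓞 K) = (1 : ℤ_[2]) ⊗ₜ 4 := by
    have := map_ofNat (Algebra.TensorProduct.includeRight :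
      𝓞 K →ₐ[ℤ] ℤ_[2] ⊗[ℤ] 𝓞 K) 4
    rw [← this]; rfl
  rw [h4, Algebra.TensorProduct.tmul_mul_tmul, one_mul]

lemma isUnit_one_add_four' (s : OK2 K) : IsUnit (1 + 4 * s) := by
  have h := (isUnit_one_add_four K (OK2equiv K s)).map (OK2equiv K).symm
  rwa [map_add, map_mul, map_one, map_ofNat, RingEquiv.symm_apply_apply] at h

lemma isUnit_of_redHom (r : OK2 K) (h : IsUnit (redHom K r)) : IsUnit r := by
  obtain ⟨b, hb⟩ := h.exists_right_inv
  obtain ⟨s, rfl⟩ := redHom_surj K b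
  obtain ⟨t, ht⟩ := redHom_eq_zero K (r * s - 1) (by rw [map_sub, map_mul, hb]; simp)
  have : r * s = 1 + 4 * t := by linear_combination ht
  exact isUnit_of_mul_isUnit_left (this ▸ isUnit_one_add_four' K t)

lemma redUnits_surj : Function.Surjective (Units.map (redHom K).toMonoidHom) := by
  intro u
  obtain ⟨r, hr⟩ := redHom_surj K u
  have hu : IsUnit r := isUnit_of_redHom K r (hr ▸ u.isUnit)
  obtain ⟨w, rfl⟩ := hu
  exact ⟨w, Units.ext hr⟩

abbrev sqRange := (powMonoidHom 2 : (OK4 K)ˣ →* (OK4 K)ˣ).range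

lemma ker_eq : ((QuotientGroup.mk' (sqRange K)).comp
    (Units.map (redHom K).toMonoidHom)).ker = modFourSquares K := by
  ext w
  rw [MonoidHom.mem_ker, MonoidHom.comp_apply, QuotientGroup.mk'_apply, QuotientGroup.eq_one_iff]
  constructor
  · rintro ⟨b, hb⟩
    obtain ⟨y, rfl⟩ := redUnits_surj K b
    have hb' : redHom K y ^ 2 = redHom K w := congrArg Units.val hb
    obtain ⟨s, hs⟩ := redHom_eq_zero K ((w : OK2 K) - (y : OK2 K) ^ 2)
      (by rw [map_sub, map_pow, hb', sub_self])
    refine ⟨s * ((y⁻¹ : (OK2 K)ˣ) : OK2 K) ^ 2, y, ?_⟩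
    have hyy : (y : OK2 K) * ((y⁻¹ : (OK2 K)ˣ) : OK2 K) = 1 := y.mul_inv
    have h2 : ((y : OK2 K) * ((y⁻¹ : (OK2 K)ˣ) : OK2 K)) ^ 2 = 1 := by rw [hyy, one_pow]
    linear_combination hs - 4 * s * h2
  · rintro ⟨a, y, h⟩
    refine ⟨Units.map (redHom K).toMonoidHom y, Units.ext ?_⟩
    change redHom K y ^ 2 = redHom K w
    rw [h, map_mul, map_add, map_mul, map_one, map_ofNat, map_pow, four_eq_zero, zero_mul,
      add_zero, one_mul]

lemma OK4_finite : Finite (OK4 K) := by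
  apply Ideal.finiteQuotientOfFreeOfNeBot
  simp

lemma exists_two_mul (x : 𝓞 K) (h : (4 : 𝓞 K) ∣ x ^ 2 - 1) : ∃ z, x = 1 + 2 * z := by
  obtain ⟨c, hc⟩ := h
  have hc' : (x : K) ^ 2 - 1 = 4 * (c : K) := by
    have := congrArg (algebraMap (𝓞 K) K) hc
    rwa [map_sub, map_pow, map_mul, map_one, map_ofNat] at this
  -- (x-1)/2 is a root of T^2 + T - c
  have hint : IsIntegral (𝓞 K) (((x : K) - 1) / 2) := by
    refine ⟨Polynomial.X ^ 2 + (Polynomial.X - Polynomial.C c), ?_, ?_⟩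
    · apply Polynomial.monic_X_pow_add
      rw [Polynomial.degree_X_sub_C]; norm_num
    · simp only [Polynomial.eval₂_add, Polynomial.eval₂_sub, Polynomial.eval₂_pow,
        Polynomial.eval₂_X, Polynomial.eval₂_C]
      linear_combination hc' / 4
  obtain ⟨z, hz⟩ := IsIntegrallyClosed.isIntegral_iff.1 hint
  refine ⟨z, ?_⟩
  apply FaithfulSMul.algebraMap_injective (𝓞 K) K
  rw [map_add, map_mul, map_one, map_ofNat, hz]
  ring

/-- `z ↦ 1 + 2z`, from `O_K` to `(O_K/4)ˣ`. -/
noncomputable def oneAddTwo : Multiplicative (𝓞 K) →* (OK4 K)ˣ where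
  toFun z :=
    have h : (1 + 2 * Ideal.Quotient.mk (Ideal.span {(4 : 𝓞 K)}) z.toAdd) *
        (1 + 2 * Ideal.Quotient.mk (Ideal.span {(4 : 𝓞 K)}) z.toAdd) = 1 := by
      generalize Ideal.Quotient.mk (Ideal.span {(4 : 𝓞 K)}) z.toAdd = a
      linear_combination (a + a ^ 2) * four_eq_zero K
    ⟨_, _, h, h⟩
  map_one' := by ext; simp
  map_mul' z w := by
    ext
    simp only [toAdd_mul, map_add, Units.val_mul]
    generalize Ideal.Quotient.mk (Ideal.span {(4 : 𝓞 K)}) z.toAdd = a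
    generalize Ideal.Quotient.mk (Ideal.span {(4 : 𝓞 K)}) w.toAdd = b
    linear_combination (- a * b) * four_eq_zero K

lemma oneAddTwo_val (z : Multiplicative (𝓞 K)) : (oneAddTwo K z : OK4 K) =
    Ideal.Quotient.mk (Ideal.span {(4 : 𝓞 K)}) (1 + 2 * z.toAdd) := by
  rw [map_add, map_mul, map_one, map_ofNat]; rfl

lemma oneAddTwo_range :
    (oneAddTwo K).range = (powMonoidHom 2 : (OK4 K)ˣ →* (OK4 K)ˣ).ker := by
  ext u
  rw [MonoidHom.mem_ker, powMonoidHom_apply]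
  constructor
  · rintro ⟨z, rfl⟩
    rw [pow_two]
    exact Units.ext (oneAddTwo K z).val_inv
  · intro h
    obtain ⟨x, hx⟩ := Ideal.Quotient.mk_surjective (u : OK4 K)
    have h1 : (u : OK4 K) ^ 2 = 1 := by rw [← Units.val_pow_eq_pow_val, h, Units.val_one]
    have h2 : (4 : 𝓞 K) ∣ x ^ 2 - 1 := by
      rw [← Ideal.mem_span_singleton, ← Ideal.Quotient.eq_zero_iff_mem, map_sub, map_pow, hx, h1,
        map_one, sub_self]
    obtain ⟨z, rfl⟩ := exists_two_mul K x h2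
    exact ⟨Multiplicative.ofAdd z, Units.ext (by rw [oneAddTwo_val, ← hx, toAdd_ofAdd])⟩

lemma oneAddTwo_ker : (oneAddTwo K).ker =
    AddSubgroup.toSubgroup (Submodule.toAddSubgroup (Ideal.span {(2 : 𝓞 K)})) := by
  ext z
  rw [MonoidHom.mem_ker, Units.ext_iff, oneAddTwo_val, Units.val_one, map_add, map_one,
    add_eq_left, Ideal.Quotient.eq_zero_iff_mem, Ideal.mem_span_singleton]
  change _ ↔ z.toAdd ∈ Ideal.span {(2 : 𝓞 K)}
  rw [Ideal.mem_span_singleton, show (4 : 𝓞 K) = 2 * 2 by norm_num]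
  exact mul_dvd_mul_iff_left two_ne_zero

lemma card_two : Nat.card (𝓞 K ⧸ Ideal.span {(2 : 𝓞 K)}) = 2 ^ Module.finrank ℚ K := by
  rw [← NumberField.RingOfIntegers.rank, ← Submodule.cardQuot_apply, ← Ideal.absNorm_apply,
    Ideal.absNorm_span_singleton]
  have := Algebra.norm_algebraMap (R := ℤ) (S := 𝓞 K) 2
  rw [map_ofNat] at this
  rw [this, Int.natAbs_pow]; rfl

lemma card_ker : Nat.card (powMonoidHom 2 : (OK4 K)ˣ →* (OK4 K)ˣ).ker =
    2 ^ Module.finrank ℚ K := by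
  rw [← oneAddTwo_range, ← Subgroup.index_ker, oneAddTwo_ker, ← card_two]
  rfl

lemma card_quot : Nat.card ((OK4 K)ˣ ⧸ sqRange K) = 2 ^ Module.finrank ℚ K := by
  have := OK4_finite K
  rw [← card_ker]
  have h1 := Subgroup.card_mul_index (sqRange K)
  have h2 := Subgroup.card_mul_index (powMonoidHom 2 : (OK4 K)ˣ →* (OK4 K)ˣ).ker
  rw [Subgroup.index_ker, ← h1, mul_comm] at h2
  exact (Nat.eq_of_mul_eq_mul_left Nat.card_pos h2).symm

/-- Let `K` be a number field of degree `n = [K:ℚ]` and `O_{K,2} = O_K ⊗_ℤ ℤ₂`.  Then the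
2-adic signature space `V₂ = O_{K,2}ˣ/((1 + 4·O_{K,2})·O_{K,2}ˣ²)` is an elementary abelian
2-group of order `2ⁿ`. -/
theorem v2_card :
    (∀ x : V2 K, x ^ 2 = 1) ∧ Nat.card (V2 K) = 2 ^ Module.finrank ℚ K := by
  refine ⟨?_, ?_⟩
  · intro x
    induction x using QuotientGroup.induction_on with
    | H w =>
      rw [← QuotientGroup.mk_pow, QuotientGroup.eq_one_iff]
      exact ⟨0, w, by rw [Units.val_pow_eq_pow_val]; ring⟩
  · rw [← card_quot K]
    have hs : Function.Surjective ((QuotientGroup.mk' (sqRange K)).comp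
        (Units.map (redHom K).toMonoidHom)) :=
      (QuotientGroup.mk'_surjective _).comp (redUnits_surj K)
    rw [← Nat.card_congr (QuotientGroup.quotientKerEquivOfSurjective _ hs).toEquiv, ker_eq]
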